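/- Let u : ℝ² → ℝ be a smooth solution of Equation (E3): u_xx = (x − u_y)·u_xy + (2y + u_x)·u_yy − u_y, such that x·u_y − u_x − 2y is nowhere zero. Then the pair P := u_y/(x·u_y − u_x − 2y), Q := −1/(x·u_y − u_x − 2y) is a conservation law: ∂P/∂y = ∂Q/∂x at every point of ℝ². -/

import Mathlib

/-- Partial derivative of a function on `ℝ²` in the direction `v`. -/
noncomputable def pd (v : ℝ × ℝ) (f : ℝ × ℝ → ℝ) : ℝ × ℝ → ℝ :=
  fun p => fderiv ℝ f p v

/-- Coordinates are `(x, y)`. -/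
noncomputable def dx : (ℝ × ℝ → ℝ) → ℝ × ℝ → ℝ := pd (1, 0)
noncomputable def dy : (ℝ × ℝ → ℝ) → ℝ × ℝ → ℝ := pd (0, 1)

/-
Write `D = x·u_y − u_x − 2y`. The quotient rule gives `D²·(P_y − Q_x) = D·u_yy − u_y·D_y − D_x`,
and expanding `D`, `D_x` and `D_y`, with `u_xy = u_yx`, turns the right-hand side into
`u_xx − (x − u_y)·u_xy − (2y + u_x)·u_yy + u_y`. So wherever `D ≠ 0`, conservation of `(P, Q)` is
equivalent to (E3).
-/

section FrechetDerivative

variable {𝕜 E F : Type*} [NontriviallyNormedField 𝕜] [NormedAddCommGroup E] [NormedSpace 𝕜 E]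
  [NormedAddCommGroup F] [NormedSpace 𝕜 F] {x : E}

theorem differentiableAt_fderiv_of_contDiffAt_two {f : E → F} (hf : ContDiffAt 𝕜 2 f x) :
    DifferentiableAt 𝕜 (fderiv 𝕜 f) x :=
  (hf.fderiv_right (m := 1) (by norm_num)).differentiableAt one_ne_zero

theorem hasFDerivAt_fun_div {f g : E → 𝕜} {f' g' : E →L[𝕜] 𝕜} (hf : HasFDerivAt f f' x)
    (hg : HasFDerivAt g g' x) (hx : g x ≠ 0) :
    HasFDerivAt (fun y => f y / g y) ((g x ^ 2)⁻¹ • (g x • f' - f x • g')) x := by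
  have hinv : HasFDerivAt (fun y => (g y)⁻¹) (-(g x ^ 2)⁻¹ • g') x :=
    (hasDerivAt_inv hx).comp_hasFDerivAt x hg
  simp only [div_eq_mul_inv]
  refine (hf.fun_mul hinv).congr_fderiv ?_
  ext v
  simp only [add_apply, sub_apply, smul_apply, smul_eq_mul]
  field

end FrechetDerivative

section PartialDerivatives

variable {f g : ℝ × ℝ → ℝ} {p : ℝ × ℝ}

theorem differentiableAt_pd (hf : DifferentiableAt ℝ (fderiv ℝ f) p) (v : ℝ × ℝ) :
    DifferentiableAt ℝ (pd v f) p :=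
  hf.clm_apply (differentiableAt_const v)

theorem pd_pd (hf : DifferentiableAt ℝ (fderiv ℝ f) p) (v w : ℝ × ℝ) :
    pd v (pd w f) p = fderiv ℝ (fderiv ℝ f) p v w := by
  change fderiv ℝ (fun q => fderiv ℝ f q w) p v = _
  simp [fderiv_clm_apply hf (differentiableAt_const w)]

theorem pd_comm (hf : ContDiffAt ℝ 2 f p) (v w : ℝ × ℝ) :
    pd v (pd w f) p = pd w (pd v f) p := by
  have hf' := differentiableAt_fderiv_of_contDiffAt_two hf
  rw [pd_pd hf', pd_pd hf']
  exact (hf.isSymmSndFDerivAt (by simp)).eq v w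

theorem pd_div (hf : DifferentiableAt ℝ f p) (hg : DifferentiableAt ℝ g p) (hp : g p ≠ 0)
    (v : ℝ × ℝ) :
    pd v (fun q => f q / g q) p = (pd v f p * g p - f p * pd v g p) / g p ^ 2 := by
  simp only [pd, (hasFDerivAt_fun_div hf.hasFDerivAt hg.hasFDerivAt hp).fderiv,
    smul_apply, sub_apply, smul_eq_mul]
  ring

theorem pd_div_eq_pd_neg_one_div_iff (hf : DifferentiableAt ℝ f p) (hg : DifferentiableAt ℝ g p)
    (hp : g p ≠ 0) (v w : ℝ × ℝ) :
    pd w (fun q => f q / g q) p = pd v (fun q => -1 / g q) p ↔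
      pd w f p * g p - f p * pd w g p = pd v g p := by
  have hconst : pd v (fun _ => (-1 : ℝ)) p = 0 := by simp [pd]
  rw [pd_div hf hg hp, pd_div (differentiableAt_const _) hg hp, hconst,
    div_left_inj' (pow_ne_zero 2 hp)]
  simp

end PartialDerivatives

section Denominator

variable {u : ℝ × ℝ → ℝ} {p : ℝ × ℝ}

/-- The common denominator `x·u_y − u_x − 2y` of the densities `P` and `Q`. -/
noncomputable def e3Denom (u : ℝ × ℝ → ℝ) : ℝ × ℝ → ℝ :=
  fun q => q.1 * dy u q - dx u q - 2 * q.2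

theorem hasFDerivAt_e3Denom (hux : DifferentiableAt ℝ (dx u) p)
    (huy : DifferentiableAt ℝ (dy u) p) :
    HasFDerivAt (e3Denom u)
      (p.1 • fderiv ℝ (dy u) p + dy u p • ContinuousLinearMap.fst ℝ ℝ ℝ - fderiv ℝ (dx u) p
        - (2 : ℝ) • ContinuousLinearMap.snd ℝ ℝ ℝ) p :=
  ((hasFDerivAt_fst.mul huy.hasFDerivAt).sub hux.hasFDerivAt).sub (hasFDerivAt_snd.const_mul 2)

theorem pd_e3Denom (hux : DifferentiableAt ℝ (dx u) p) (huy : DifferentiableAt ℝ (dy u) p)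
    (v : ℝ × ℝ) :
    pd v (e3Denom u) p = p.1 * pd v (dy u) p + dy u p * v.1 - pd v (dx u) p - 2 * v.2 := by
  simp [pd, (hasFDerivAt_e3Denom hux huy).fderiv]

theorem dx_e3Denom (hux : DifferentiableAt ℝ (dx u) p) (huy : DifferentiableAt ℝ (dy u) p) :
    dx (e3Denom u) p = p.1 * dx (dy u) p + dy u p - dx (dx u) p := by
  simpa [dx] using pd_e3Denom hux huy (1, 0)

theorem dy_e3Denom (hux : DifferentiableAt ℝ (dx u) p) (huy : DifferentiableAt ℝ (dy u) p) :
    dy (e3Denom u) p = p.1 * dy (dy u) p - dy (dx u) p - 2 := by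
  simpa [dy] using pd_e3Denom hux huy (0, 1)

end Denominator

theorem E3_conservation_law'_general {u : ℝ × ℝ → ℝ} {p : ℝ × ℝ} (hu : ContDiffAt ℝ 2 u p)
    (hden : e3Denom u p ≠ 0) :
    dy (fun q => dy u q / e3Denom u q) p = dx (fun q => -1 / e3Denom u q) p ↔
      dx (dx u) p =
        (p.1 - dy u p) * dy (dx u) p + (2 * p.2 + dx u p) * dy (dy u) p - dy u p := by
  have hu' : DifferentiableAt ℝ (fderiv ℝ u) p := differentiableAt_fderiv_of_contDiffAt_two hu
  have hux : DifferentiableAt ℝ (dx u) p := differentiableAt_pd hu' (1, 0)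
  have huy : DifferentiableAt ℝ (dy u) p := differentiableAt_pd hu' (0, 1)
  have hmixed : dx (dy u) p = dy (dx u) p := pd_comm hu (1, 0) (0, 1)
  have hquot : dy (fun q => dy u q / e3Denom u q) p = dx (fun q => -1 / e3Denom u q) p ↔
      dy (dy u) p * e3Denom u p - dy u p * dy (e3Denom u) p = dx (e3Denom u) p :=
    pd_div_eq_pd_neg_one_div_iff huy (hasFDerivAt_e3Denom hux huy).differentiableAt hden _ _
  rw [hquot, dx_e3Denom hux huy, dy_e3Denom hux huy, hmixed, e3Denom]
  constructor <;> intro h <;> linear_combination h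

/-- For a smooth solution `u` of Equation (E3)
`u_xx = (x − u_y)·u_xy + (2y + u_x)·u_yy − u_y` with `x·u_y − u_x − 2y` nowhere
zero, the pair `P = u_y/(x·u_y − u_x − 2y)`, `Q = −1/(x·u_y − u_x − 2y)` is a
conservation law: `∂P/∂y = ∂Q/∂x`. -/
theorem E3_conservation_law' (u : ℝ × ℝ → ℝ)
    (hu : ContDiff ℝ (⊤ : ℕ∞) u)
    (hden : ∀ p : ℝ × ℝ, p.1 * dy u p - dx u p - 2 * p.2 ≠ 0)
    (hsol : ∀ p : ℝ × ℝ,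
      dx (dx u) p =
        (p.1 - dy u p) * dy (dx u) p + (2 * p.2 + dx u p) * dy (dy u) p - dy u p) :
    ∀ p : ℝ × ℝ,
      dy (fun q => dy u q / (q.1 * dy u q - dx u q - 2 * q.2)) p
        = dx (fun q => -1 / (q.1 * dy u q - dx u q - 2 * q.2)) p :=
  fun p => (E3_conservation_law'_general (hu.contDiffAt.of_le (by norm_cast)) (hden p)).2 (hsol p)
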